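/- For any θ ∈ (0, 1/2) and any μ with 0 < μ ≤ 1/(20√n), for every w ∈ ℝ^{n−1} with ‖w‖ ≤ μ/(4√2), the Hessian in w of the expected objective satisfies ∇²_w E[h_μ(q(w)ᵀ x)] ⪰ (θ/(5√(2π) μ)) I, where x ∈ ℝ^n is a random vector with i.i.d. BG(θ) entries and I is the (n−1)×(n−1) identity matrix. -/

import Mathlib

open MeasureTheory ProbabilityTheory Real Matrix
open scoped RealInnerProductSpace ENNReal NNReal

noncomputable section

/-- The Bernoulli–Gaussian law `BG(θ)`: with probability `θ` a standard Gaussian,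
with probability `1-θ` a point mass at `0`. -/
def bg (θ : ℝ) : Measure ℝ :=
  θ.toNNReal • gaussianReal 0 1 + (1 - θ).toNNReal • Measure.dirac 0

instance bg.instIsFiniteMeasure (θ : ℝ) : IsFiniteMeasure (bg θ) := by
  unfold bg; infer_instance

/-- Law of an `n × p` matrix with i.i.d. `BG(θ)` entries. -/
def bgMatrix (θ : ℝ) (n p : ℕ) : Measure (Fin n → Fin p → ℝ) :=
  Measure.pi fun _ => Measure.pi fun _ => bg θ

/-- Law of a vector in `ℝ^n` with i.i.d. `BG(θ)` entries. -/
def bgVec (θ : ℝ) (n : ℕ) : Measure (Fin n → ℝ) :=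
  Measure.pi fun _ => bg θ

/-- The smooth sparsity surrogate `h_μ(z) = μ log cosh (z/μ)`. -/
def hmu (μ z : ℝ) : ℝ := μ * Real.log (Real.cosh (z / μ))

/-- Reparametrization `q(w) = (w, √(1-‖w‖²))` with `w` in the unit ball of `ℝ^{n-1}`. -/
def qmap (n : ℕ) (w : EuclideanSpace ℝ (Fin (n - 1))) : Fin n → ℝ :=
  fun i => if h : (i : ℕ) < n - 1 then w ⟨i, h⟩ else Real.sqrt (1 - ‖w‖ ^ 2)

/-- `f(q; Y) = (1/p) ∑ₖ h_μ(qᵀ yₖ)`. -/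
def ffun (n p : ℕ) (μ : ℝ) (Y : Matrix (Fin n) (Fin p) ℝ)
    (q : EuclideanSpace ℝ (Fin n)) : ℝ :=
  (p : ℝ)⁻¹ * ∑ k : Fin p, hmu μ (∑ i : Fin n, q i * Y i k)

/-- `g(w; Y) = f(q(w); Y)`. -/
def gfun (n p : ℕ) (μ : ℝ) (Y : Matrix (Fin n) (Fin p) ℝ)
    (w : EuclideanSpace ℝ (Fin (n - 1))) : ℝ :=
  (p : ℝ)⁻¹ * ∑ k : Fin p, hmu μ (∑ i : Fin n, qmap n w i * Y i k)

/-- Gradient `∇g(w; Y)` in `w`. -/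
def gradg (n p : ℕ) (μ : ℝ) (Y : Matrix (Fin n) (Fin p) ℝ)
    (w : EuclideanSpace ℝ (Fin (n - 1))) : EuclideanSpace ℝ (Fin (n - 1)) :=
  gradient (gfun n p μ Y) w

/-- Hessian `∇²g(w; Y)` in `w`, as a continuous linear map. -/
def hessg (n p : ℕ) (μ : ℝ) (Y : Matrix (Fin n) (Fin p) ℝ)
    (w : EuclideanSpace ℝ (Fin (n - 1))) :
    EuclideanSpace ℝ (Fin (n - 1)) →L[ℝ] EuclideanSpace ℝ (Fin (n - 1)) :=
  fderiv ℝ (gradg n p μ Y) w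

/-- The set `Γ = {w : ‖w‖ < √((4n-1)/(4n))}`. -/
def GammaSet (n : ℕ) : Set (EuclideanSpace ℝ (Fin (n - 1))) :=
  {w | ‖w‖ < Real.sqrt ((4 * (n : ℝ) - 1) / (4 * n))}

/-- Spectral (`ℓ²→ℓ²` operator) norm of а matrix. -/
def specNorm {m k : ℕ} (M : Matrix (Fin m) (Fin k) ℝ) : ℝ :=
  ‖LinearMap.toContinuousLinearMap (Matrix.toEuclideanLin M)‖

/-- Largest magnitude of an entry of a matrix. -/
def Minf {m k : ℕ} (M : Matrix (Fin m) (Fin k) ℝ) : ℝ := ⨆ i, ⨆ j, |M i j|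

/-- Condition number: ratio of largest to smallest singular value. -/
def kappa {n : ℕ} (s : Fin n → ℝ) : ℝ := (⨆ i, s i) / (⨅ i, s i)

/-- Signed standard basis vectors `{± e_i}` of `ℝ^n`. -/
def SignedBasis (n : ℕ) : Set (EuclideanSpace ℝ (Fin n)) :=
  {b | ∃ i : Fin n, b = EuclideanSpace.single i (1 : ℝ) ∨ b = -EuclideanSpace.single i (1 : ℝ)}

/-- Set of local minimizers of `f(·; Y)` over the unit sphere `S^{n-1}`. -/
def LocalMins (n p : ℕ) (μ : ℝ) (Y : Matrix (Fin n) (Fin p) ℝ) :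
    Set (EuclideanSpace ℝ (Fin n)) :=
  {q | q ∈ Metric.sphere (0 : EuclideanSpace ℝ (Fin n)) 1 ∧
       IsLocalMinOn (ffun n p μ Y) (Metric.sphere (0 : EuclideanSpace ℝ (Fin n)) 1) q}

/-- Expected objective `E_x[h_μ(q(w)ᵀ x)]` for `x` with i.i.d. `BG(θ)` entries. -/
def Gexp (n : ℕ) (θ μ : ℝ) (w : EuclideanSpace ℝ (Fin (n - 1))) : ℝ :=
  ∫ x, hmu μ (∑ i : Fin n, qmap n w i * x i) ∂(bgVec θ n)

instance bg.instIsProbabilityMeasure (θ : unitInterval) : IsProbabilityMeasure (bg θ) := by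
  constructor
  have h0 := θ.2.1
  have h1 : (0 : ℝ) ≤ 1 - θ := sub_nonneg.2 θ.2.2
  have h : bg θ Set.univ = (θ : ℝ).toNNReal + (1 - (θ : ℝ)).toNNReal := by
    simp [bg]
  rw [h, ← ENNReal.coe_add, ← Real.toNNReal_add h0 h1]
  simp

instance bgVec.instIsProbabilityMeasure (θ : unitInterval) (n : ℕ) :
    IsProbabilityMeasure (bgVec θ n) := by
  unfold bgVec; infer_instance

/-- Integration against `BG(θ)` splits into the Gaussian part and the atom at `0`. -/
lemma integral_bg (θ : unitInterval) {f : ℝ → ℝ} (hf : Integrable f (gaussianReal 0 1)) :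
    ∫ z, f z ∂(bg θ) = θ * ∫ z, f z ∂(gaussianReal 0 1) + (1 - θ) * f 0 := by
  have hd : Integrable f (Measure.dirac 0) := integrable_dirac (by simp)
  rw [bg, integral_add_measure hf.smul_measure_nnreal hd.smul_measure_nnreal,
    integral_smul_nnreal_measure, integral_smul_nnreal_measure, integral_dirac]
  simp [NNReal.smul_def, θ.2.1, θ.2.2]

lemma memLp_id_bg (θ : ℝ) (p : ℝ≥0∞) (hp : p ≠ 0) (hp' : p ≠ ∞) : MemLp id p (bg θ) := by
  rw [← integrable_norm_rpow_iff (by fun_prop) hp hp', bg]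
  exact ((memLp_id_gaussianReal' p hp').integrable_norm_rpow hp hp').smul_measure_nnreal.add_measure
    (integrable_dirac (by simp)).smul_measure_nnreal

lemma integral_pow_odd_gaussianReal {k : ℕ} (hk : Odd k) :
    ∫ z, z ^ k ∂(gaussianReal 0 1) = 0 := by
  have h : ∫ z, z ^ k ∂((gaussianReal 0 1).map fun x ↦ -x) = ∫ z, z ^ k ∂(gaussianReal 0 1) := by
    rw [gaussianReal_map_neg, neg_zero]
  rw [integral_map (by fun_prop) (by fun_prop)] at h
  simp only [hk.neg_pow, integral_neg] at h
  linarith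

lemma integral_sq_gaussianReal : ∫ z, z ^ 2 ∂(gaussianReal 0 1) = 1 := by
  have h := variance_fun_id_gaussianReal (μ := 0) (v := 1)
  rw [variance_eq_integral measurable_id'.aemeasurable] at h
  simpa using h

lemma integral_pow_four_gaussianReal : ∫ z, z ^ 4 ∂(gaussianReal 0 1) = 3 := by
  have h := iteratedDeriv_mgf_zero (X := fun x ↦ x) (μ := gaussianReal 0 1) (by simp) 4
  have hd (P P' : ℝ → ℝ) (hP : ∀ t, HasDerivAt P (P' t) t) :
      deriv (fun t : ℝ ↦ P t * rexp (t ^ 2 / 2)) = fun t ↦ (P' t + t * P t) * rexp (t ^ 2 / 2) := by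
    ext t
    have he : HasDerivAt (fun t : ℝ ↦ rexp (t ^ 2 / 2)) (rexp (t ^ 2 / 2) * t) t := by
      convert! (((hasDerivAt_id t).pow 2).div_const 2).exp using 1
      simp
    rw [((hP t).fun_mul he).deriv]
    ring
  have hm : mgf (fun x ↦ x) (gaussianReal 0 1) = fun t : ℝ ↦ 1 * rexp (t ^ 2 / 2) := by
    rw [mgf_fun_id_gaussianReal]; simp
  simp only [iteratedDeriv_succ, iteratedDeriv_zero, hm] at h
  rw [hd (fun _ ↦ 1) (fun _ ↦ 0) (fun t ↦ hasDerivAt_const t 1)] at h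
  rw [hd (fun t ↦ 0 + t * 1) (fun _ ↦ 1) (fun t ↦ by simpa using hasDerivAt_id' t)] at h
  rw [hd (fun t ↦ 1 + t * (0 + t * 1)) (fun t ↦ 2 * t) (fun t ↦ by
    convert! ((hasDerivAt_id t).pow 2).const_add 1 using 1
    · ext t; simp; ring
    · simp)] at h
  rw [hd (fun t ↦ 2 * t + t * (1 + t * (0 + t * 1))) (fun t ↦ 3 + 3 * t ^ 2) (fun t ↦ by
    convert! ((hasDerivAt_id t).const_mul 3).add ((hasDerivAt_id t).pow 3) using 1
    · ext t; simp; ring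
    · simp)] at h
  simpa using h.symm

lemma integrable_pow_gaussianReal (k : ℕ) : Integrable (fun z ↦ z ^ k) (gaussianReal 0 1) := by
  have h := (memLp_id_gaussianReal (μ := 0) (v := 1) (k : ℝ≥0)).integrable_norm_pow' (p := k)
  exact h.mono (by fun_prop) (by simp)

lemma integral_bgVec_succ (θ : ℝ) (m : ℕ) {f : (Fin (m + 1) → ℝ) → ℝ}
    (hf : Integrable f (bgVec θ (m + 1))) :
    ∫ x, f x ∂(bgVec θ (m + 1)) =
      ∫ x, ∫ z, f (Fin.snoc x z) ∂(bg θ) ∂(bgVec θ m) := by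
  have e := (measurePreserving_piFinSuccAbove (fun _ : Fin (m + 1) ↦ bg θ) (Fin.last m)).symm
  have hi := (e.integrable_comp_emb (MeasurableEquiv.measurableEmbedding _)).2 hf
  rw [bgVec, ← e.integral_comp', integral_prod_symm]
  · simp [MeasurableEquiv.piFinSuccAbove_symm_apply, Fin.insertNthEquiv, bgVec]
  · exact hi

lemma memLp_eval_bgVec (θ : unitInterval) {m : ℕ} (p : ℝ≥0∞) (hp : p ≠ 0) (hp' : p ≠ ∞)
    (i : Fin m) :
    MemLp (fun x : Fin m → ℝ ↦ x i) p (bgVec θ m) :=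
  (memLp_id_bg θ p hp hp').comp_measurePreserving (measurePreserving_eval (fun _ : Fin m ↦ bg θ) i)

lemma memLp_dotProduct_bgVec (θ : unitInterval) {m : ℕ} (p : ℝ≥0∞) (hp : p ≠ 0) (hp' : p ≠ ∞)
    (a : Fin m → ℝ) :
    MemLp (fun x : Fin m → ℝ ↦ a ⬝ᵥ x) p (bgVec θ m) :=
  memLp_finsetSum _ fun i _ ↦ (memLp_eval_bgVec θ p hp hp' i).const_mul (a i)

lemma integrable_dotProduct_mul_bgVec (θ : unitInterval) {m : ℕ} (a b : Fin m → ℝ) :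
    Integrable (fun x ↦ (a ⬝ᵥ x) * (b ⬝ᵥ x)) (bgVec θ m) :=
  (memLp_dotProduct_bgVec θ 2 (by simp) (by simp) a).integrable_mul
    (memLp_dotProduct_bgVec θ 2 (by simp) (by simp) b)

lemma memLp_sq_dotProduct_bgVec (θ : unitInterval) {m : ℕ} (a : Fin m → ℝ) :
    MemLp (fun x ↦ (a ⬝ᵥ x) ^ 2) 2 (bgVec θ m) := by
  have h := (memLp_dotProduct_bgVec θ (4 : ℕ) (by simp) (by simp) a).integrable_norm_pow
    (by decide)
  rw [memLp_two_iff_integrable_sq ((memLp_dotProduct_bgVec θ 2 (by simp) (by simp) a).1.fun_pow 2)]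
  refine h.congr (ae_of_all _ fun x ↦ ?_)
  simp only [Real.norm_eq_abs, ← pow_mul]
  exact Even.pow_abs (by decide) _

lemma integrable_sq_dotProduct_mul_sq_bgVec (θ : unitInterval) {m : ℕ} (a b : Fin m → ℝ) :
    Integrable (fun x ↦ (a ⬝ᵥ x) ^ 2 * (b ⬝ᵥ x) ^ 2) (bgVec θ m) :=
  (memLp_sq_dotProduct_bgVec θ a).integrable_mul (memLp_sq_dotProduct_bgVec θ b)

lemma dotProduct_snoc {m : ℕ} (a : Fin (m + 1) → ℝ) (x : Fin m → ℝ) (z : ℝ) :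
    a ⬝ᵥ Fin.snoc x z = Fin.init a ⬝ᵥ x + a (Fin.last m) * z := by
  simp [dotProduct, Fin.sum_univ_castSucc, Fin.init_def]

lemma dotProduct_init {m : ℕ} (a b : Fin (m + 1) → ℝ) :
    a ⬝ᵥ b = Fin.init a ⬝ᵥ Fin.init b + a (Fin.last m) * b (Fin.last m) := by
  simp [dotProduct, Fin.sum_univ_castSucc, Fin.init_def]

/-- Moments up to order four of a quartic polynomial under `BG(θ)`. -/
lemma integral_quartic_bg (θ : unitInterval) (c₀ c₁ c₂ c₃ c₄ : ℝ) :
    ∫ z, (c₀ + c₁ * z + c₂ * z ^ 2 + c₃ * z ^ 3 + c₄ * z ^ 4) ∂(bg θ) =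
      c₀ + c₂ * θ + 3 * c₄ * θ := by
  have h1 : Integrable (fun z ↦ c₁ * z) (gaussianReal 0 1) := by
    simpa using (integrable_pow_gaussianReal 1).const_mul c₁
  have h2 := (integrable_pow_gaussianReal 2).const_mul c₂
  have h3 := (integrable_pow_gaussianReal 3).const_mul c₃
  have h4 := (integrable_pow_gaussianReal 4).const_mul c₄
  have h0 := integrable_const (μ := gaussianReal 0 1) c₀
  rw [integral_bg θ ((((h0.fun_add h1).fun_add h2).fun_add h3).fun_add h4),
    integral_add (((h0.fun_add h1).fun_add h2).fun_add h3) h4,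
    integral_add ((h0.fun_add h1).fun_add h2) h3,
    integral_add (h0.fun_add h1) h2, integral_add h0 h1]
  have e1 : ∫ z, c₁ * z ∂(gaussianReal 0 1) = 0 := by
    rw [integral_const_mul, integral_id_gaussianReal, mul_zero]
  simp only [e1, integral_const_mul, integral_sq_gaussianReal,
    integral_pow_four_gaussianReal, integral_pow_odd_gaussianReal (k := 3) (by decide)]
  simp
  ring

lemma integral_dotProduct_mul_bgVec (θ : unitInterval) {m : ℕ} (a b : Fin m → ℝ) :
    ∫ x, (a ⬝ᵥ x) * (b ⬝ᵥ x) ∂(bgVec θ m) = θ * (a ⬝ᵥ b) := by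
  induction m with
  | zero => simp
  | succ m ih =>
    rw [integral_bgVec_succ _ _ (integrable_dotProduct_mul_bgVec θ a b)]
    have hz (x : Fin m → ℝ) : ∫ z, (a ⬝ᵥ Fin.snoc x z) * (b ⬝ᵥ Fin.snoc x z) ∂(bg θ) =
        (Fin.init a ⬝ᵥ x) * (Fin.init b ⬝ᵥ x) + a (Fin.last m) * b (Fin.last m) * θ := by
      have h := integral_quartic_bg θ ((Fin.init a ⬝ᵥ x) * (Fin.init b ⬝ᵥ x))
        ((Fin.init a ⬝ᵥ x) * b (Fin.last m) + a (Fin.last m) * (Fin.init b ⬝ᵥ x))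
        (a (Fin.last m) * b (Fin.last m)) 0 0
      rw [mul_zero, zero_mul, add_zero] at h
      rw [← h]
      congr with z
      rw [dotProduct_snoc, dotProduct_snoc]
      ring
    simp_rw [hz]
    rw [integral_add (integrable_dotProduct_mul_bgVec θ _ _) (integrable_const _), ih,
      dotProduct_init a b]
    simp
    ring

lemma integral_sq_dotProduct_mul_sq_bgVec_le (θ : unitInterval) {m : ℕ} (a b : Fin m → ℝ) :
    ∫ x, (a ⬝ᵥ x) ^ 2 * (b ⬝ᵥ x) ^ 2 ∂(bgVec θ m) ≤ 3 * θ * ((a ⬝ᵥ a) * (b ⬝ᵥ b)) := by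
  induction m with
  | zero => simp
  | succ m ih =>
    rw [integral_bgVec_succ _ _ (integrable_sq_dotProduct_mul_sq_bgVec θ a b)]
    set α := a (Fin.last m) with hα
    set β := b (Fin.last m) with hβ
    set a' := Fin.init a with ha'
    set b' := Fin.init b with hb'
    have hz (x : Fin m → ℝ) : ∫ z, (a ⬝ᵥ Fin.snoc x z) ^ 2 * (b ⬝ᵥ Fin.snoc x z) ^ 2 ∂(bg θ) =
        (a' ⬝ᵥ x) ^ 2 * (b' ⬝ᵥ x) ^ 2 + (α ^ 2 * ((b' ⬝ᵥ x) * (b' ⬝ᵥ x)) +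
          4 * α * β * ((a' ⬝ᵥ x) * (b' ⬝ᵥ x)) + β ^ 2 * ((a' ⬝ᵥ x) * (a' ⬝ᵥ x))) * θ
          + 3 * (α ^ 2 * β ^ 2) * θ := by
      rw [← integral_quartic_bg θ _ (2 * (a' ⬝ᵥ x) ^ 2 * (b' ⬝ᵥ x) * β
          + 2 * (a' ⬝ᵥ x) * (b' ⬝ᵥ x) ^ 2 * α) _
          (2 * α * (a' ⬝ᵥ x) * β ^ 2 + 2 * α ^ 2 * β * (b' ⬝ᵥ x))]
      congr with z
      rw [dotProduct_snoc, dotProduct_snoc]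
      ring
    simp_rw [hz]
    have i1 := integrable_sq_dotProduct_mul_sq_bgVec θ a' b'
    have i2 := (integrable_dotProduct_mul_bgVec θ b' b').const_mul (α ^ 2)
    have i3 := (integrable_dotProduct_mul_bgVec θ a' b').const_mul (4 * α * β)
    have i4 := (integrable_dotProduct_mul_bgVec θ a' a').const_mul (β ^ 2)
    rw [integral_add (i1.fun_add (((i2.fun_add i3).fun_add i4).mul_const _)) (integrable_const _),
      integral_add i1 (((i2.fun_add i3).fun_add i4).mul_const _), integral_mul_const,
      integral_add (i2.fun_add i3) i4, integral_add i2 i3]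
    simp only [integral_const_mul, integral_dotProduct_mul_bgVec]
    simp only [integral_const, probReal_univ, one_smul]
    have hq : 0 ≤ α ^ 2 * (b' ⬝ᵥ b') - 2 * (α * β) * (a' ⬝ᵥ b') + β ^ 2 * (a' ⬝ᵥ a') := by
      have h : 0 ≤ (α • b' - β • a') ⬝ᵥ (α • b' - β • a') :=
        Finset.sum_nonneg fun i _ ↦ mul_self_nonneg _
      simp only [sub_dotProduct, dotProduct_sub, smul_dotProduct, dotProduct_smul,
        smul_eq_mul, dotProduct_comm b' a'] at h
      linarith
    have hA : 0 ≤ a' ⬝ᵥ a' := Finset.sum_nonneg fun i _ ↦ mul_self_nonneg _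
    have hB : 0 ≤ b' ⬝ᵥ b' := Finset.sum_nonneg fun i _ ↦ mul_self_nonneg _
    have hS : 0 ≤ α ^ 2 * (b' ⬝ᵥ b') + β ^ 2 * (a' ⬝ᵥ a') := by positivity
    have h0 := θ.2.1
    have h1 : 0 ≤ (1 - (θ : ℝ)) := sub_nonneg.2 θ.2.2
    rw [dotProduct_init a a, dotProduct_init b b, ← ha', ← hb', ← hα, ← hβ]
    have k1 := ih a' b'
    have k2 := mul_nonneg (mul_nonneg h0 h0) hq
    have k3 := mul_nonneg (mul_nonneg h0 h1) hS
    nlinarith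

lemma hasDerivAt_hmu {μ : ℝ} (hμ : μ ≠ 0) (z : ℝ) :
    HasDerivAt (hmu μ) (Real.tanh (z / μ)) z := by
  have h := ((((hasDerivAt_id z).div_const μ).cosh).log (Real.cosh_pos _).ne').const_mul μ
  convert! h using 1
  rw [Real.tanh_eq_sinh_div_cosh]
  simp only [id]
  field_simp

lemma hasDerivAt_tanh_div {μ : ℝ} (z : ℝ) :
    HasDerivAt (fun z ↦ Real.tanh (z / μ)) ((Real.cosh (z / μ) ^ 2)⁻¹ / μ) z := by
  have hc := (Real.cosh_pos (z / μ)).ne'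
  have h := (((hasDerivAt_id z).div_const μ).sinh).fun_div (((hasDerivAt_id z).div_const μ).cosh) hc
  simp only [id] at h
  simp only [Real.tanh_eq_sinh_div_cosh]
  convert! h using 1
  have := Real.cosh_sq (z / μ)
  rw [show cosh (z / μ) * (1 / μ) * cosh (z / μ) - sinh (z / μ) * (sinh (z / μ) * (1 / μ)) =
    (cosh (z / μ) ^ 2 - sinh (z / μ) ^ 2) / μ by ring, this]
  ring

lemma continuous_hmu {μ : ℝ} (hμ : μ ≠ 0) : Continuous (hmu μ) :=
  continuous_iff_continuousAt.2 fun z ↦ (hasDerivAt_hmu hμ z).continuousAt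

lemma continuous_tanh_div (μ : ℝ) : Continuous fun z ↦ Real.tanh (z / μ) :=
  continuous_iff_continuousAt.2 fun z ↦ (hasDerivAt_tanh_div z).continuousAt

lemma abs_hmu_le {μ : ℝ} (hμ : 0 < μ) (z : ℝ) : |hmu μ z| ≤ |z| := by
  have h0 : 0 ≤ Real.log (Real.cosh (z / μ)) := Real.log_nonneg (Real.one_le_cosh _)
  have h1 : Real.log (Real.cosh (z / μ)) ≤ |z| / μ := by
    rw [Real.log_le_iff_le_exp (Real.cosh_pos _), ← abs_of_pos hμ, ← abs_div, ← Real.cosh_abs,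
      abs_of_pos hμ, ← Real.cosh_add_sinh |z / μ|]
    exact le_add_of_nonneg_right (Real.sinh_nonneg_iff.2 (abs_nonneg _))
  rw [hmu, abs_of_nonneg (by positivity)]
  calc μ * Real.log (Real.cosh (z / μ)) ≤ μ * (|z| / μ) := by gcongr
    _ = |z| := by field_simp

/-- A lower bound for `sech²`. -/
lemma one_sub_sq_le_inv_cosh_sq (t : ℝ) : 1 - t ^ 2 ≤ (Real.cosh t ^ 2)⁻¹ := by
  have h : Real.cosh t ^ 2 ≤ rexp (t ^ 2) := by
    calc Real.cosh t ^ 2 ≤ rexp (t ^ 2 / 2) ^ 2 := by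
          gcongr
          exact Real.cosh_le_exp_half_sq t
      _ = rexp (t ^ 2) := by rw [← Real.exp_nat_mul]; congr 1; push_cast; ring
  calc 1 - t ^ 2 ≤ rexp (-t ^ 2) := by linarith [Real.add_one_le_exp (-t ^ 2)]
    _ = (rexp (t ^ 2))⁻¹ := Real.exp_neg _
    _ ≤ _ := inv_anti₀ (by positivity) h

/-- The dot product as a continuous bilinear map. -/
def dotCLM (n : ℕ) : (Fin n → ℝ) →L[ℝ] (Fin n → ℝ) →L[ℝ] ℝ :=
  ∑ i, (ContinuousLinearMap.proj (R := ℝ) (φ := fun _ : Fin n ↦ ℝ) i).smulRight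
    (ContinuousLinearMap.proj (R := ℝ) (φ := fun _ : Fin n ↦ ℝ) i)

lemma dotCLM_apply {n : ℕ} (x q : Fin n → ℝ) : dotCLM n x q = q ⬝ᵥ x := by
  simp [dotCLM, dotProduct, mul_comm]

section Integral

set_option maxSynthPendingDepth 3

variable {n : ℕ} {P : Measure (Fin n → ℝ)}

/-- The expected derivative of `q ↦ h_μ(qᵀx)`. -/
def gradF (P : Measure (Fin n → ℝ)) (μ : ℝ) (q : Fin n → ℝ) : (Fin n → ℝ) →L[ℝ] ℝ :=
  ∫ x, Real.tanh (dotCLM n x q / μ) • dotCLM n x ∂P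

/-- The second derivative of `q ↦ h_μ(qᵀx)`. -/
def sechForm (μ : ℝ) (q x : Fin n → ℝ) : (Fin n → ℝ) →L[ℝ] (Fin n → ℝ) →L[ℝ] ℝ :=
  (((Real.cosh (dotCLM n x q / μ) ^ 2)⁻¹ / μ) • dotCLM n x).smulRight (dotCLM n x)

/-- The expected second derivative of `q ↦ h_μ(qᵀx)`. -/
def hessF (P : Measure (Fin n → ℝ)) (μ : ℝ) (q : Fin n → ℝ) :
    (Fin n → ℝ) →L[ℝ] (Fin n → ℝ) →L[ℝ] ℝ :=
  ∫ x, sechForm μ q x ∂P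

lemma norm_tanh_smul_dotCLM_le (μ : ℝ) (x q : Fin n → ℝ) :
    ‖Real.tanh (dotCLM n x q / μ) • dotCLM n x‖ ≤ ‖dotCLM n‖ * ‖x‖ := by
  rw [norm_smul, Real.norm_eq_abs]
  calc _ ≤ 1 * (‖dotCLM n‖ * ‖x‖) := by
        gcongr
        · exact (Real.abs_tanh_lt_one _).le
        · exact (dotCLM n).le_opNorm x
    _ = _ := one_mul _

lemma integrable_tanh_smul_dotCLM (h1 : Integrable (fun x ↦ x) P) (μ : ℝ) (q : Fin n → ℝ) :
    Integrable (fun x ↦ Real.tanh (dotCLM n x q / μ) • dotCLM n x) P := by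
  refine (h1.norm.const_mul ‖dotCLM n‖).mono' ?_ (ae_of_all _ fun x ↦
    norm_tanh_smul_dotCLM_le μ x q)
  have := continuous_tanh_div μ
  have hc : Continuous fun x ↦ Real.tanh (dotCLM n x q / μ) := this.comp (by fun_prop)
  exact (hc.smul (dotCLM n).continuous).aestronglyMeasurable

lemma norm_sechForm_le {μ : ℝ} (hμ : 0 < μ) (x q : Fin n → ℝ) :
    ‖sechForm μ q x‖ ≤ μ⁻¹ * ‖dotCLM n‖ ^ 2 * ‖x‖ ^ 2 := by
  rw [sechForm, ContinuousLinearMap.norm_smulRight_apply, norm_smul, Real.norm_eq_abs,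
    abs_of_nonneg (by positivity), div_eq_mul_inv]
  have hx := (dotCLM n).le_opNorm x
  have hc : (Real.cosh (dotCLM n x q / μ) ^ 2)⁻¹ ≤ 1 :=
    inv_le_one_of_one_le₀ (one_le_pow₀ (Real.one_le_cosh _))
  calc _ ≤ (1 * μ⁻¹ * (‖dotCLM n‖ * ‖x‖)) * (‖dotCLM n‖ * ‖x‖) := by gcongr
    _ = _ := by ring

lemma continuous_sechForm (μ : ℝ) (q : Fin n → ℝ) :
    Continuous (sechForm μ q) := by
  have h : Continuous fun x ↦ (Real.cosh (dotCLM n x q / μ) ^ 2)⁻¹ / μ :=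
    (Continuous.inv₀ (by fun_prop) fun x ↦ (pow_pos (Real.cosh_pos _) 2).ne').div_const μ
  exact ((ContinuousLinearMap.smulRightL ℝ (Fin n → ℝ) ((Fin n → ℝ) →L[ℝ] ℝ)).continuous₂).comp
    ((h.smul (dotCLM n).continuous).prodMk (dotCLM n).continuous)

lemma integrable_sechForm (h2 : Integrable (fun x ↦ ‖x‖ ^ 2) P) {μ : ℝ}
    (hμ : 0 < μ) (q : Fin n → ℝ) :
    Integrable (sechForm μ q) P :=
  (h2.const_mul (μ⁻¹ * ‖dotCLM n‖ ^ 2)).mono'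
    (continuous_sechForm μ q).aestronglyMeasurable
    (ae_of_all _ fun x ↦ norm_sechForm_le hμ x q)

lemma hasFDerivAt_integral_hmu (h1 : Integrable (fun x ↦ x) P) {μ : ℝ} (hμ : 0 < μ)
    (q : Fin n → ℝ) :
    HasFDerivAt (fun q ↦ ∫ x, hmu μ (dotCLM n x q) ∂P) (gradF P μ q) q := by
  have hm (q : Fin n → ℝ) : AEStronglyMeasurable (fun x ↦ hmu μ (dotCLM n x q)) P :=
    ((continuous_hmu hμ.ne').comp (by fun_prop)).aestronglyMeasurable
  refine hasFDerivAt_integral_of_dominated_of_fderiv_le Filter.univ_mem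
    (Filter.Eventually.of_forall hm) ?_ (integrable_tanh_smul_dotCLM h1 μ q).1
    (ae_of_all _ fun x q _ ↦ norm_tanh_smul_dotCLM_le μ x q) (h1.norm.const_mul _)
    (ae_of_all _ fun x q _ ↦ (hasDerivAt_hmu hμ.ne' _).comp_hasFDerivAt q
      (dotCLM n x).hasFDerivAt)
  refine (h1.norm.const_mul (‖dotCLM n‖ * ‖q‖)).mono' (hm q) (ae_of_all _ fun x ↦ ?_)
  calc ‖hmu μ (dotCLM n x q)‖ ≤ ‖dotCLM n x q‖ := abs_hmu_le hμ _
    _ ≤ ‖dotCLM n‖ * ‖x‖ * ‖q‖ := (dotCLM n).le_opNorm₂ x q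
    _ = _ := by ring

lemma hasFDerivAt_gradF (h1 : Integrable (fun x ↦ x) P) (h2 : Integrable (fun x ↦ ‖x‖ ^ 2) P)
    {μ : ℝ} (hμ : 0 < μ) (q : Fin n → ℝ) :
    HasFDerivAt (gradF P μ) (hessF P μ q) q := by
  refine hasFDerivAt_integral_of_dominated_of_fderiv_le Filter.univ_mem
    (Filter.Eventually.of_forall fun q ↦ (integrable_tanh_smul_dotCLM h1 μ q).1)
    (integrable_tanh_smul_dotCLM h1 μ q) (integrable_sechForm h2 hμ q).1
    (ae_of_all _ fun x q _ ↦ norm_sechForm_le hμ x q) (h2.const_mul _)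
    (ae_of_all _ fun x q _ ↦ ?_)
  exact ((hasDerivAt_tanh_div _).comp_hasFDerivAt q (dotCLM n x).hasFDerivAt).smul_const
    (dotCLM n x)

lemma gradF_apply (h1 : Integrable (fun x ↦ x) P) (μ : ℝ) (q y : Fin n → ℝ) :
    gradF P μ q y = ∫ x, Real.tanh ((q ⬝ᵥ x) / μ) * (y ⬝ᵥ x) ∂P := by
  rw [gradF, ContinuousLinearMap.integral_apply (integrable_tanh_smul_dotCLM h1 μ q)]
  simp [dotCLM_apply]

lemma hessF_apply (h2 : Integrable (fun x ↦ ‖x‖ ^ 2) P) {μ : ℝ} (hμ : 0 < μ)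
    (q y : Fin n → ℝ) :
    hessF P μ q y y = ∫ x, μ⁻¹ * ((Real.cosh ((q ⬝ᵥ x) / μ) ^ 2)⁻¹ * (y ⬝ᵥ x) ^ 2) ∂P := by
  have h := integrable_sechForm h2 hμ q
  rw [hessF, ContinuousLinearMap.integral_apply h,
    ContinuousLinearMap.integral_apply (h.apply_continuousLinearMap y)]
  congr with x
  simp [sechForm, dotCLM_apply]
  ring

end Integral

lemma integrable_id_bgVec (θ : unitInterval) (m : ℕ) :
    Integrable (fun x : Fin m → ℝ ↦ x) (bgVec θ m) := by
  rw [← memLp_one_iff_integrable, memLp_pi_iff]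
  exact fun i ↦ memLp_eval_bgVec θ 1 (by simp) (by simp) i

lemma integrable_norm_sq_bgVec (θ : unitInterval) (m : ℕ) :
    Integrable (fun x : Fin m → ℝ ↦ ‖x‖ ^ 2) (bgVec θ m) := by
  have h : MemLp (fun x : Fin m → ℝ ↦ x) (2 : ℕ) (bgVec θ m) :=
    memLp_pi_iff.2 fun i ↦ memLp_eval_bgVec θ _ (by simp) (by simp) i
  exact h.integrable_norm_pow (by decide)

lemma integrable_integral_bgVec_succ (θ : ℝ) (m : ℕ) {f : (Fin (m + 1) → ℝ) → ℝ}
    (hf : Integrable f (bgVec θ (m + 1))) :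
    Integrable (fun x ↦ ∫ z, f (Fin.snoc x z) ∂(bg θ)) (bgVec θ m) := by
  have e := (measurePreserving_piFinSuccAbove (fun _ : Fin (m + 1) ↦ bg θ) (Fin.last m)).symm
  have hi := (e.integrable_comp_emb (MeasurableEquiv.measurableEmbedding _)).2 hf
  simpa [MeasurableEquiv.piFinSuccAbove_symm_apply, Fin.insertNthEquiv, bgVec] using!
    hi.integral_prod_right

/-- Conditioning on the last coordinate being zero bounds the expected second derivative below. -/
lemma le_hessF_bgVec (θ : unitInterval) {m : ℕ} {μ : ℝ} (hμ : 0 < μ) (q y : Fin (m + 1) → ℝ) :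
    μ⁻¹ * ((1 - θ) * (θ * (Fin.init y ⬝ᵥ Fin.init y) -
      3 * θ * ((Fin.init q ⬝ᵥ Fin.init q) * (Fin.init y ⬝ᵥ Fin.init y)) / μ ^ 2)) ≤
      hessF (bgVec θ (m + 1)) μ q y y := by
  have h1 : 0 ≤ (1 - (θ : ℝ)) := sub_nonneg.2 θ.2.2
  rw [hessF_apply (integrable_norm_sq_bgVec θ _) hμ, integral_const_mul]
  refine mul_le_mul_of_nonneg_left ?_ (by positivity)
  set f : (Fin (m + 1) → ℝ) → ℝ := fun x ↦ (Real.cosh ((q ⬝ᵥ x) / μ) ^ 2)⁻¹ * (y ⬝ᵥ x) ^ 2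
    with hf_def
  have hf0 (x) : 0 ≤ f x := by positivity
  have hfle (x) : f x ≤ (y ⬝ᵥ x) ^ 2 := mul_le_of_le_one_left (sq_nonneg _)
    (inv_le_one_of_one_le₀ (one_le_pow₀ (Real.one_le_cosh _)))
  have hfc : Continuous f := by
    refine Continuous.mul (Continuous.inv₀ ?_ fun x ↦ (pow_pos (Real.cosh_pos _) 2).ne') ?_
    · unfold dotProduct; fun_prop
    · unfold dotProduct; fun_prop
  have hfi : Integrable f (bgVec θ (m + 1)) := by
    refine (integrable_dotProduct_mul_bgVec θ y y).mono' hfc.aestronglyMeasurable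
      (ae_of_all _ fun x ↦ ?_)
    rw [Real.norm_eq_abs, abs_of_nonneg (hf0 x), ← sq]
    exact hfle x
  rw [integral_bgVec_succ _ _ hfi]
  set a := Fin.init q with ha
  set b := Fin.init y with hb
  have hlow (x : Fin m → ℝ) :
      (1 - θ) * ((b ⬝ᵥ x) * (b ⬝ᵥ x) - ((a ⬝ᵥ x) ^ 2 * (b ⬝ᵥ x) ^ 2) / μ ^ 2) ≤
        ∫ z, f (Fin.snoc x z) ∂(bg θ) := by
    have hg : Integrable (fun z ↦ f (Fin.snoc x z)) (gaussianReal 0 1) := by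
      refine (((integrable_pow_gaussianReal 2).const_mul (2 * y (Fin.last m) ^ 2)).add
        (integrable_const (2 * (b ⬝ᵥ x) ^ 2))).mono' ?_ (ae_of_all _ fun z ↦ ?_)
      · exact (hfc.comp (by fun_prop)).aestronglyMeasurable
      · rw [Real.norm_eq_abs, abs_of_nonneg (hf0 _)]
        refine (hfle _).trans ?_
        rw [dotProduct_snoc]
        simp only [Pi.add_apply]
        nlinarith [sq_nonneg (b ⬝ᵥ x - y (Fin.last m) * z)]
    rw [integral_bg θ hg]
    refine le_add_of_nonneg_of_le (mul_nonneg θ.2.1 (integral_nonneg fun z ↦ hf0 _)) ?_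
    refine mul_le_mul_of_nonneg_left ?_ h1
    simp only [hf_def, dotProduct_snoc, mul_zero, add_zero, ← ha, ← hb]
    calc _ = (1 - ((a ⬝ᵥ x) / μ) ^ 2) * (b ⬝ᵥ x) ^ 2 := by ring
      _ ≤ _ := by gcongr; exact one_sub_sq_le_inv_cosh_sq _
  have i1 := integrable_dotProduct_mul_bgVec θ b b
  have i2 := (integrable_sq_dotProduct_mul_sq_bgVec θ a b).div_const (μ ^ 2)
  calc _ ≤ (1 - (θ : ℝ)) * (∫ x, (b ⬝ᵥ x) * (b ⬝ᵥ x) ∂(bgVec θ m) -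
        (∫ x, (a ⬝ᵥ x) ^ 2 * (b ⬝ᵥ x) ^ 2 ∂(bgVec θ m)) / μ ^ 2) := by
        rw [integral_dotProduct_mul_bgVec]
        gcongr
        exact integral_sq_dotProduct_mul_sq_bgVec_le θ a b
    _ = ∫ x, (1 - (θ : ℝ)) * ((b ⬝ᵥ x) * (b ⬝ᵥ x) -
        ((a ⬝ᵥ x) ^ 2 * (b ⬝ᵥ x) ^ 2) / μ ^ 2) ∂(bgVec θ m) := by
        rw [integral_const_mul, integral_sub i1 i2, integral_div]
    _ ≤ _ := integral_mono ((i1.sub i2).const_mul _) (integrable_integral_bgVec_succ _ _ hfi) hlow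

lemma integral_abs_bg_le (θ : unitInterval) : ∫ z, |z| ∂(bg θ) ≤ θ := by
  have h1 : Integrable (fun z ↦ |z|) (gaussianReal 0 1) := by
    simpa using (integrable_pow_gaussianReal 1).abs
  have h2 : ∫ z, |z| ∂(gaussianReal 0 1) ≤ 1 := by
    calc _ ≤ ∫ z, (1 / 2 + 1 / 2 * z ^ 2) ∂(gaussianReal 0 1) := by
          refine integral_mono h1 ((integrable_const _).add
            ((integrable_pow_gaussianReal 2).const_mul _)) fun z ↦ ?_
          simp only
          nlinarith [sq_nonneg (|z| - 1), sq_abs z]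
      _ = 1 := by
          rw [integral_add (integrable_const _) ((integrable_pow_gaussianReal 2).const_mul _),
            integral_const_mul, integral_sq_gaussianReal]
          norm_num
  rw [integral_bg θ h1]
  simpa using mul_le_of_le_one_right θ.2.1 h2

lemma abs_gradF_bgVec_le (θ : unitInterval) {m : ℕ} (μ : ℝ) (q : Fin (m + 1) → ℝ) (c : ℝ) :
    |gradF (bgVec θ (m + 1)) μ q (Pi.single (Fin.last m) c)| ≤ |c| * θ := by
  rw [gradF_apply (integrable_id_bgVec θ _)]
  have hi : Integrable (fun x : Fin (m + 1) → ℝ ↦ |c| * |x (Fin.last m)|) (bgVec θ (m + 1)) :=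
    ((memLp_one_iff_integrable.1
      (memLp_eval_bgVec θ 1 (by simp) (by simp) (Fin.last m))).abs).const_mul _
  calc _ ≤ ∫ x : Fin (m + 1) → ℝ, |c| * |x (Fin.last m)| ∂(bgVec θ (m + 1)) := by
        change ‖∫ x, Real.tanh ((q ⬝ᵥ x) / μ) * (Pi.single (Fin.last m) c ⬝ᵥ x)
          ∂(bgVec θ (m + 1))‖ ≤ _
        refine norm_integral_le_of_norm_le hi (ae_of_all _ fun x ↦ ?_)
        rw [single_dotProduct, Real.norm_eq_abs, abs_mul, abs_mul]
        exact mul_le_of_le_one_left (by positivity) (Real.abs_tanh_lt_one _).le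
    _ = |c| * ∫ z, |z| ∂(bg θ) := by
        rw [integral_const_mul, bgVec,
          integral_comp_eval (μ := fun _ ↦ bg θ) (i := Fin.last m) (f := fun z ↦ |z|)
          (by fun_prop)]
    _ ≤ _ := by gcongr; exact integral_abs_bg_le θ

section Curve

variable {m : ℕ}

/-- The reparametrization `w ↦ (w, √(1-‖w‖²))`. -/
def sphereLift (w : EuclideanSpace ℝ (Fin m)) : Fin (m + 1) → ℝ :=
  Fin.snoc (α := fun _ ↦ ℝ) w.ofLp (Real.sqrt (1 - ‖w‖ ^ 2))

/-- The derivative of `sphereLift` at `w` in direction `v`. -/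
def sphereLiftDeriv (w v : EuclideanSpace ℝ (Fin m)) : Fin (m + 1) → ℝ :=
  Fin.snoc (α := fun _ ↦ ℝ) v.ofLp (-⟪w, v⟫ / Real.sqrt (1 - ‖w‖ ^ 2))

lemma one_sub_norm_sq_pos {w : EuclideanSpace ℝ (Fin m)} (hw : ‖w‖ < 1) : 0 < 1 - ‖w‖ ^ 2 := by
  nlinarith [norm_nonneg w]

lemma contDiffAt_sphereLift {w : EuclideanSpace ℝ (Fin m)} (hw : ‖w‖ < 1) :
    ContDiffAt ℝ 2 (sphereLift (m := m)) w := by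
  rw [contDiffAt_pi]
  refine Fin.lastCases ?_ fun i ↦ ?_
  · simp only [sphereLift, Fin.snoc_last]
    exact (contDiffAt_const.sub (contDiff_norm_sq ℝ).contDiffAt).sqrt (one_sub_norm_sq_pos hw).ne'
  · simp only [sphereLift, Fin.snoc_castSucc]
    fun_prop

lemma hasDerivAt_line (w v : EuclideanSpace ℝ (Fin m)) (t : ℝ) :
    HasDerivAt (fun t : ℝ ↦ w + t • v) v t := by
  simpa using ((hasDerivAt_id t).smul_const v).const_add w

lemma hasDerivAt_comp_line {F : Type*} [NormedAddCommGroup F] [NormedSpace ℝ F]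
    {f : EuclideanSpace ℝ (Fin m) → F} {w : EuclideanSpace ℝ (Fin m)}
    (hf : DifferentiableAt ℝ f w) (v : EuclideanSpace ℝ (Fin m)) :
    HasDerivAt (fun t : ℝ ↦ f (w + t • v)) (fderiv ℝ f w v) 0 := by
  have h : HasFDerivAt f (fderiv ℝ f w) (w + (0 : ℝ) • v) := by simpa using hf.hasFDerivAt
  exact h.comp_hasDerivAt (0 : ℝ) (hasDerivAt_line w v 0)

lemma hasDerivAt_sqrt_one_sub_norm_sq {w : EuclideanSpace ℝ (Fin m)} (hw : ‖w‖ < 1)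
    (v : EuclideanSpace ℝ (Fin m)) :
    HasDerivAt (fun t : ℝ ↦ Real.sqrt (1 - ‖w + t • v‖ ^ 2))
      (-⟪w, v⟫ / Real.sqrt (1 - ‖w‖ ^ 2)) 0 := by
  have h := ((hasDerivAt_line w v 0).norm_sq.const_sub 1).sqrt
    (by simpa using (one_sub_norm_sq_pos hw).ne')
  simp only [zero_smul, add_zero] at h
  convert! h using 1
  ring

lemma fderiv_sphereLift {w : EuclideanSpace ℝ (Fin m)} (hw : ‖w‖ < 1)
    (v : EuclideanSpace ℝ (Fin m)) :
    fderiv ℝ sphereLift w v = sphereLiftDeriv w v := by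
  have h1 : HasDerivAt (fun t : ℝ ↦ sphereLift (w + t • v)) (fderiv ℝ sphereLift w v) 0 :=
    hasDerivAt_comp_line ((contDiffAt_sphereLift hw).differentiableAt (by simp)) v
  refine h1.unique (hasDerivAt_pi.2 (Fin.lastCases ?_ fun i ↦ ?_))
  · simpa only [sphereLift, sphereLiftDeriv, Fin.snoc_last] using
      hasDerivAt_sqrt_one_sub_norm_sq hw v
  · simp only [sphereLift, sphereLiftDeriv, Fin.snoc_castSucc]
    simpa using ((hasDerivAt_id (0 : ℝ)).mul_const (v i)).const_add (w i)

lemma hasDerivAt_sphereLiftDeriv {w : EuclideanSpace ℝ (Fin m)} (hw : ‖w‖ < 1)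
    (v : EuclideanSpace ℝ (Fin m)) :
    HasDerivAt (fun t : ℝ ↦ sphereLiftDeriv (w + t • v) v)
      (Pi.single (Fin.last m) (-((‖v‖ ^ 2 * Real.sqrt (1 - ‖w‖ ^ 2) +
        ⟪w, v⟫ ^ 2 / Real.sqrt (1 - ‖w‖ ^ 2)) / Real.sqrt (1 - ‖w‖ ^ 2) ^ 2))) 0 := by
  have hs := Real.sqrt_pos.2 (one_sub_norm_sq_pos hw)
  refine hasDerivAt_pi.2 (Fin.lastCases ?_ fun i ↦ ?_)
  · simp only [sphereLiftDeriv, Fin.snoc_last, Pi.single_eq_same]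
    have h := ((hasDerivAt_line w v 0).inner ℝ (hasDerivAt_const 0 v)).fun_neg.fun_div
      (hasDerivAt_sqrt_one_sub_norm_sq hw v) (by simpa using hs.ne')
    simp only [zero_smul, add_zero, inner_zero_right, zero_add, real_inner_self_eq_norm_sq] at h
    convert! h using 1
    ring
  · simp only [sphereLiftDeriv, Fin.snoc_castSucc,
      Pi.single_eq_of_ne (Fin.castSucc_lt_last i).ne]
    exact hasDerivAt_const _ _

variable {P : Measure (Fin (m + 1) → ℝ)}

/-- The expected objective in the coordinates `w`. -/
def liftedObjective (P : Measure (Fin (m + 1) → ℝ)) (μ : ℝ) (w : EuclideanSpace ℝ (Fin m)) : ℝ :=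
  ∫ x, hmu μ (dotCLM (m + 1) x (sphereLift w)) ∂P

lemma hasFDerivAt_liftedObjective (h1 : Integrable (fun x ↦ x) P) {μ : ℝ} (hμ : 0 < μ)
    {w : EuclideanSpace ℝ (Fin m)} (hw : ‖w‖ < 1) :
    HasFDerivAt (liftedObjective P μ)
      ((gradF P μ (sphereLift w)).comp (fderiv ℝ sphereLift w)) w :=
  (hasFDerivAt_integral_hmu h1 hμ (sphereLift w)).comp w
    ((contDiffAt_sphereLift hw).differentiableAt (by simp)).hasFDerivAt

lemma fderiv_liftedObjective_eventuallyEq (h1 : Integrable (fun x ↦ x) P) {μ : ℝ} (hμ : 0 < μ)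
    {w : EuclideanSpace ℝ (Fin m)} (hw : ‖w‖ < 1) :
    fderiv ℝ (liftedObjective P μ) =ᶠ[nhds w]
      fun p ↦ (gradF P μ (sphereLift p)).comp (fderiv ℝ sphereLift p) := by
  filter_upwards [(isOpen_lt continuous_norm continuous_const).mem_nhds hw] with p hp
  exact (hasFDerivAt_liftedObjective h1 hμ hp).fderiv

lemma differentiableAt_fderiv_liftedObjective (h1 : Integrable (fun x ↦ x) P)
    (h2 : Integrable (fun x ↦ ‖x‖ ^ 2) P) {μ : ℝ} (hμ : 0 < μ)
    {w : EuclideanSpace ℝ (Fin m)} (hw : ‖w‖ < 1) :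
    DifferentiableAt ℝ (fderiv ℝ (liftedObjective P μ)) w := by
  refine DifferentiableAt.congr_of_eventuallyEq ?_ (fderiv_liftedObjective_eventuallyEq h1 hμ hw)
  have hq := contDiffAt_sphereLift hw
  have hg : DifferentiableAt ℝ (fun p ↦ gradF P μ (sphereLift p)) w :=
    (hasFDerivAt_gradF h1 h2 hμ (sphereLift w)).differentiableAt.comp w
      (hq.differentiableAt (by simp))
  exact hg.clm_comp ((hq.fderiv_right (m := 1) (by norm_num)).differentiableAt (by simp))

/-- The second derivative of the expected objective along a direction. -/
lemma fderiv_fderiv_liftedObjective (h1 : Integrable (fun x ↦ x) P)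
    (h2 : Integrable (fun x ↦ ‖x‖ ^ 2) P) {μ : ℝ} (hμ : 0 < μ)
    {w : EuclideanSpace ℝ (Fin m)} (hw : ‖w‖ < 1) (v : EuclideanSpace ℝ (Fin m)) :
    fderiv ℝ (fderiv ℝ (liftedObjective P μ)) w v v =
      hessF P μ (sphereLift w) (sphereLiftDeriv w v) (sphereLiftDeriv w v) +
      gradF P μ (sphereLift w)
        (Pi.single (Fin.last m) (-((‖v‖ ^ 2 * Real.sqrt (1 - ‖w‖ ^ 2) +
          ⟪w, v⟫ ^ 2 / Real.sqrt (1 - ‖w‖ ^ 2)) / Real.sqrt (1 - ‖w‖ ^ 2) ^ 2))) := by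
  have hline : Filter.Tendsto (fun t : ℝ ↦ w + t • v) (nhds 0) (nhds w) := by
    simpa using (hasDerivAt_line w v 0).continuousAt.tendsto
  have hd : HasDerivAt (fun t : ℝ ↦ fderiv ℝ (liftedObjective P μ) (w + t • v) v)
      (fderiv ℝ (fderiv ℝ (liftedObjective P μ)) w v v) 0 := by
    have h : HasDerivAt (fun t : ℝ ↦ fderiv ℝ (liftedObjective P μ) (w + t • v))
        (fderiv ℝ (fderiv ℝ (liftedObjective P μ)) w v) 0 :=
      hasDerivAt_comp_line (differentiableAt_fderiv_liftedObjective h1 h2 hμ hw) v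
    simpa using h.clm_apply (hasDerivAt_const (0 : ℝ) v)
  have hq : HasDerivAt (fun t : ℝ ↦ sphereLift (w + t • v)) (sphereLiftDeriv w v) 0 := by
    rw [← fderiv_sphereLift hw]
    exact hasDerivAt_comp_line ((contDiffAt_sphereLift hw).differentiableAt (by simp)) v
  have hg : HasDerivAt (fun t : ℝ ↦ gradF P μ (sphereLift (w + t • v)))
      (hessF P μ (sphereLift w) (sphereLiftDeriv w v)) 0 := by
    have h : HasFDerivAt (gradF P μ) (hessF P μ (sphereLift w))
        (sphereLift (w + (0 : ℝ) • v)) := by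
      simpa using hasFDerivAt_gradF h1 h2 hμ (sphereLift w)
    exact h.comp_hasDerivAt (0 : ℝ) hq
  have hprod := hg.clm_apply (hasDerivAt_sphereLiftDeriv hw v)
  simp only [zero_smul, add_zero] at hprod
  refine hd.unique (hprod.congr_of_eventuallyEq ?_)
  filter_upwards [hline.eventually (fderiv_liftedObjective_eventuallyEq h1 hμ hw),
    hline.eventually ((isOpen_lt continuous_norm continuous_const).mem_nhds hw)] with t ht ht'
  rw [ht, ContinuousLinearMap.comp_apply, fderiv_sphereLift ht']

end Curve

lemma inner_fderiv_gradient {E : Type*} [NormedAddCommGroup E] [InnerProductSpace ℝ E]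
    [CompleteSpace E] (f : E → ℝ) (w v : E) :
    ⟪fderiv ℝ (gradient f) w v, v⟫ = fderiv ℝ (fderiv ℝ f) w v v := by
  have h : gradient f = (InnerProductSpace.toDual ℝ E).symm ∘ fderiv ℝ f := rfl
  rw [h, LinearIsometryEquiv.comp_fderiv]
  exact InnerProductSpace.toDual_symm_apply

lemma dotProduct_ofLp_self {m : ℕ} (w : EuclideanSpace ℝ (Fin m)) :
    w.ofLp ⬝ᵥ w.ofLp = ‖w‖ ^ 2 := by
  rw [EuclideanSpace.real_norm_sq_eq]
  simp [dotProduct, sq]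

lemma liftedObjective_hessian_lower_bound {m : ℕ} {θ μ : ℝ} (hθ : θ ∈ Set.Ioo (0 : ℝ) (1 / 2))
    (hμ0 : 0 < μ) (hμ : μ ≤ 1 / 20) (w : EuclideanSpace ℝ (Fin m))
    (hw : ‖w‖ ^ 2 ≤ μ ^ 2 / 32) (v : EuclideanSpace ℝ (Fin m)) :
    θ / (5 * Real.sqrt (2 * π) * μ) * ‖v‖ ^ 2 ≤
      fderiv ℝ (fderiv ℝ (liftedObjective (bgVec θ (m + 1)) μ)) w v v := by
  obtain ⟨hθ0, hθ1⟩ := hθ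
  lift θ to unitInterval using ⟨hθ0.le, by linarith⟩
  have hw' : ‖w‖ ^ 2 ≤ 1 / 12800 := by nlinarith
  have hw1 : ‖w‖ < 1 := by nlinarith [norm_nonneg w]
  rw [fderiv_fderiv_liftedObjective (integrable_id_bgVec θ _) (integrable_norm_sq_bgVec θ _) hμ0
    hw1]
  set s := Real.sqrt (1 - ‖w‖ ^ 2) with hs
  have hs2 : s ^ 2 = 1 - ‖w‖ ^ 2 := Real.sq_sqrt (one_sub_norm_sq_pos hw1).le
  have hs0 : 0 < s := Real.sqrt_pos.2 (one_sub_norm_sq_pos hw1)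
  have hs1 : s ≤ 1 := by nlinarith [norm_nonneg w]
  have hs3 : 1 / 2 ≤ s := by nlinarith
  have hc : ⟪w, v⟫ ^ 2 ≤ ‖w‖ ^ 2 * ‖v‖ ^ 2 := by
    rw [← mul_pow, ← sq_abs]
    gcongr
    exact abs_real_inner_le_norm w v
  set N := ‖v‖ ^ 2 with hN
  have hN0 : 0 ≤ N := by positivity
  set K := (N * s + ⟪w, v⟫ ^ 2 / s) / s ^ 2 with hK
  have hK0 : 0 ≤ K := by positivity
  have hK2 : K ≤ 2 * N := by
    have h1 : ⟪w, v⟫ ^ 2 / s ≤ N / 6400 := by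
      rw [div_le_iff₀ hs0]
      nlinarith
    rw [hK, div_le_iff₀ (by positivity), hs2]
    nlinarith
  have hgrad := abs_gradF_bgVec_le θ μ (sphereLift w) (-K)
  rw [abs_neg, abs_of_nonneg hK0] at hgrad
  have hgrad' := neg_le_of_abs_le hgrad
  have hhess := le_hessF_bgVec θ hμ0 (sphereLift w) (sphereLiftDeriv w v)
  simp only [sphereLift, sphereLiftDeriv, Fin.init_snoc, dotProduct_ofLp_self] at hhess
  rw [← hN] at hhess
  have hlow : 9 / 20 * (μ⁻¹ * (θ * N)) ≤ μ⁻¹ * ((1 - θ) * (θ * N -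
      3 * θ * (‖w‖ ^ 2 * N) / μ ^ 2)) := by
    have h1 : 3 * θ * (‖w‖ ^ 2 * N) / μ ^ 2 ≤ 3 / 32 * (θ * N) := by
      rw [div_le_iff₀ (by positivity)]
      have := mul_le_mul_of_nonneg_right hw (mul_nonneg hθ0.le hN0)
      nlinarith
    have h2 : 29 / 32 * (θ * N) ≤ θ * N - 3 * θ * (‖w‖ ^ 2 * N) / μ ^ 2 := by linarith
    have h3 : 0 ≤ θ * N := mul_nonneg hθ0.le hN0
    have h4 : 9 / 20 * (θ * N) ≤ (1 - θ) * (θ * N - 3 * θ * (‖w‖ ^ 2 * N) / μ ^ 2) :=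
      calc _ ≤ 1 / 2 * (29 / 32 * (θ * N)) := by linarith
        _ ≤ _ := mul_le_mul (by linarith) h2 (by linarith) (by linarith)
    rw [mul_left_comm]
    exact mul_le_mul_of_nonneg_left h4 (by positivity)
  have hKθ : K * θ ≤ 1 / 10 * (μ⁻¹ * (θ * N)) := by
    have h1 : 20 ≤ μ⁻¹ := by
      rw [le_inv_comm₀ (by norm_num) hμ0]
      simpa using hμ
    have h3 : 0 ≤ θ * N := mul_nonneg hθ0.le hN0
    nlinarith
  have htarget : θ / (5 * Real.sqrt (2 * π) * μ) * N ≤ 1 / 10 * (μ⁻¹ * (θ * N)) := by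
    have h2 : 2 ≤ Real.sqrt (2 * π) := by
      rw [Real.le_sqrt (by norm_num) (by positivity)]
      nlinarith [Real.pi_gt_three]
    calc _ ≤ θ / (5 * 2 * μ) * N := by gcongr
      _ = _ := by field_simp; ring
  have h3 : 0 ≤ μ⁻¹ * (θ * N) := by positivity
  simp only [sphereLift, sphereLiftDeriv] at hgrad' ⊢
  linarith

/-- Proposition: strong convexity region of the expected objective. -/
theorem statement6 (n : ℕ) (θ μ : ℝ) (hθ : θ ∈ Set.Ioo (0 : ℝ) (1 / 2)) (hμ0 : 0 < μ)
    (hμ : μ ≤ 1 / (20 * Real.sqrt n)) (w : EuclideanSpace ℝ (Fin (n - 1)))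
    (hw : ‖w‖ ≤ μ / (4 * Real.sqrt 2)) :
    ∀ v : EuclideanSpace ℝ (Fin (n - 1)),
      θ / (5 * Real.sqrt (2 * π) * μ) * ‖v‖ ^ 2 ≤
        ⟪fderiv ℝ (gradient (Gexp n θ μ)) w v, v⟫ := by
  cases n with
  | zero =>
    simp only [Nat.cast_zero, Real.sqrt_zero, mul_zero, div_zero] at hμ
    linarith
  | succ m =>
    intro v
    have hn : 1 ≤ Real.sqrt ((m + 1 : ℕ) : ℝ) := by simp
    have hμ' : μ ≤ 1 / 20 := hμ.trans (one_div_le_one_div_of_le (by norm_num) (by linarith))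
    have hw' : ‖w‖ ^ 2 ≤ μ ^ 2 / 32 := by
      calc ‖w‖ ^ 2 ≤ (μ / (4 * Real.sqrt 2)) ^ 2 := by gcongr
        _ = μ ^ 2 / 32 := by
          rw [div_pow, mul_pow, Real.sq_sqrt (by norm_num)]
          norm_num
    rw [inner_fderiv_gradient]
    have hG : Gexp (m + 1) θ μ = liftedObjective (m := m) (bgVec θ (m + 1)) μ := by
      funext p
      have hq : qmap (m + 1) p = sphereLift (m := m) p := by
        funext i
        refine Fin.lastCases ?_ (fun j ↦ ?_) i
        · simp [qmap, sphereLift]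
        · simp [qmap, sphereLift]
      simp only [Gexp, liftedObjective, dotCLM_apply, hq, dotProduct]
    rw [hG]
    exact liftedObjective_hessian_lower_bound hθ hμ0 hμ' w hw' v

end
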